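/- If τ ≥ τ_n(p_n), τ → 0, p_n → ∞ and p_n = o(n), then there exists a large enough constant L > 0 such that liminf_{n→∞} inf_{θ_0 ∈ ℓ0[p_n]} P_{θ_0}( θ_0 ∈ Ĉ_n(L, τ) ) ≥ 1 − α. -/

import Mathlib

open MeasureTheory ProbabilityTheory Filter Set Real Asymptotics
open scoped ENNReal NNReal BigOperators

noncomputable section

/-- Standard normal density `φ`. -/
def phiN (x : ℝ) : ℝ := (Real.sqrt (2 * Real.pi))⁻¹ * Real.exp (-(x ^ 2) / 2)

/-- Horseshoe prior density with global parameter `τ`. -/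
def gHS (τ θ : ℝ) : ℝ :=
  ∫ l in Set.Ioi (0 : ℝ), phiN (θ / (l * τ)) / (l * τ) * (2 / (Real.pi * (1 + l ^ 2)))

/-- Unnormalised marginal posterior density of `θᵢ` given `Yᵢ = y` (parameter `τ`). -/
def postDens (τ y θ : ℝ) : ℝ := phiN (y - θ) * gHS τ θ

/-- Bayesian marginal density `ψ_τ(y)` of one observation. -/
def margDens (τ y : ℝ) : ℝ := ∫ θ, postDens τ y θ

/-- Marginal posterior probability `Π(θᵢ ∈ A | Yᵢ = y, τ)`. -/
def postProb (τ y : ℝ) (A : Set ℝ) : ℝ := (∫ θ in A, postDens τ y θ) / margDens τ y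

/-- Marginal posterior mean `θ̂ᵢ(τ)`. -/
def postMean (τ y : ℝ) : ℝ := (∫ θ, θ * postDens τ y θ) / margDens τ y

/-- Marginal posterior variance. -/
def postVar (τ y : ℝ) : ℝ :=
  (∫ θ, (θ - postMean τ y) ^ 2 * postDens τ y θ) / margDens τ y

/-- Marginal posterior fourth central moment. -/
def postMom4 (τ y : ℝ) : ℝ :=
  (∫ θ, (θ - postMean τ y) ^ 4 * postDens τ y θ) / margDens τ y

/-- `ζ_τ = √(2 log (1/τ))`. -/
def zet (τ : ℝ) : ℝ := Real.sqrt (2 * Real.log (1 / τ))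

/-- `τ_n(p) = (p/n) √(log (n/p))`. -/
def tauOpt (n p : ℕ) : ℝ := ((p : ℝ) / (n : ℝ)) * Real.sqrt (Real.log ((n : ℝ) / (p : ℝ)))

/-- The law `P_{θ₀}` of `Y^n`. -/
def Pdata {n : ℕ} (θ₀ : Fin n → ℝ) : Measure (Fin n → ℝ) :=
  Measure.pi fun i => gaussianReal (θ₀ i) 1

/-- The standard normal upper `α`-quantile `z_α`. -/
def zquant (α : ℝ) : ℝ := sInf {z : ℝ | ((gaussianReal 0 1) (Set.Ioi z)).toReal ≤ α}

/-- Nearly black vectors `ℓ₀[p]`. -/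
def nearlyBlack (n p : ℕ) : Set (Fin n → ℝ) :=
  {θ | ({i | θ i ≠ 0} : Set (Fin n)).ncard ≤ p}

/-- Unnormalised posterior density of the full vector `θ` given `Y^n = y` and `τ`. -/
def fullDens {n : ℕ} (τ : ℝ) (y θ : Fin n → ℝ) : ℝ := ∏ i, postDens τ (y i) (θ i)

/-- Posterior probability `Π(θ ∈ A | Y^n = y, τ)` of a set of vectors. -/
def fullPostProb {n : ℕ} (τ : ℝ) (y : Fin n → ℝ) (A : Set (Fin n → ℝ)) : ℝ :=
  (∫ θ in A, fullDens τ y θ) / ∫ θ, fullDens τ y θ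

/-- Posterior mean of the full vector (coordinatewise, by conditional independence). -/
def fullPostMean {n : ℕ} (τ : ℝ) (y : Fin n → ℝ) : Fin n → ℝ := fun i => postMean τ (y i)

/-- Euclidean distance on `ℝⁿ`. -/
def l2dist {n : ℕ} (a b : Fin n → ℝ) : ℝ := Real.sqrt (∑ i, (a i - b i) ^ 2)

/-- Marginal likelihood of `τ`. -/
def lik {n : ℕ} (τ : ℝ) (y : Fin n → ℝ) : ℝ := ∏ i, margDens τ (y i)

/-- Unnormalised hierarchical posterior weight of `τ` given the data. -/
def hierWeight {n : ℕ} (pr : ℝ → ℝ) (y : Fin n → ℝ) (τ : ℝ) : ℝ := pr τ * lik τ y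

/-- Hierarchical posterior distribution of `τ`. -/
def hierTauProb {n : ℕ} (pr : ℝ → ℝ) (y : Fin n → ℝ) (A : Set ℝ) : ℝ :=
  (∫ τ in A, hierWeight pr y τ) / ∫ τ, hierWeight pr y τ

/-- Hierarchical marginal posterior probability for coordinate `i`. -/
def hierPostProb {n : ℕ} (pr : ℝ → ℝ) (y : Fin n → ℝ) (i : Fin n) (A : Set ℝ) : ℝ :=
  (∫ τ, hierWeight pr y τ * postProb τ (y i) A) / ∫ τ, hierWeight pr y τ

/-- Hierarchical marginal posterior mean for coordinate `i`. -/
def hierPostMean {n : ℕ} (pr : ℝ → ℝ) (y : Fin n → ℝ) (i : Fin n) : ℝ :=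
  (∫ τ, hierWeight pr y τ * postMean τ (y i)) / ∫ τ, hierWeight pr y τ

/-- Hierarchical posterior probability of a set of vectors. -/
def hierFullPostProb {n : ℕ} (pr : ℝ → ℝ) (y : Fin n → ℝ) (A : Set (Fin n → ℝ)) : ℝ :=
  (∫ τ, pr τ * ∫ θ in A, fullDens τ y θ) / ∫ τ, pr τ * ∫ θ, fullDens τ y θ

/-- Hierarchical posterior mean vector. -/
def hierFullPostMean {n : ℕ} (pr : ℝ → ℝ) (y : Fin n → ℝ) : Fin n → ℝ :=
  fun i => hierPostMean pr y i

/-- The functions `I_k`. -/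
def Ik (τ k y : ℝ) : ℝ :=
  ∫ z in Set.Ioc (0 : ℝ) 1, z ^ k * (τ ^ 2 + (1 - τ ^ 2) * z)⁻¹ * Real.exp (y ^ 2 * z / 2)

/-- The function `m_τ`. -/
def mHS (τ y : ℝ) : ℝ :=
  y ^ 2 * ((Ik τ (1 / 2) y - Ik τ (3 / 2) y) / Ik τ (-(1 / 2)) y) -
    Ik τ (1 / 2) y / Ik τ (-(1 / 2)) y

/-- The excessive-bias restriction with witness `q`. -/
def EBRwith (n : ℕ) (A Cs C : ℝ) (θ : Fin n → ℝ) (q : ℕ) : Prop :=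
  1 ≤ q ∧
    (∑ i, if |θ i| < A * Real.sqrt (2 * Real.log ((n : ℝ) / (q : ℝ))) then (θ i) ^ 2 else 0)
        ≤ C * (q : ℝ) * Real.log ((n : ℝ) / (q : ℝ)) ∧
    (q : ℝ) / Cs ≤
      (({i | A * Real.sqrt (2 * Real.log ((n : ℝ) / (q : ℝ))) ≤ |θ i|} : Set (Fin n)).ncard : ℝ)

/-- The excessive-bias restriction. -/
def EBR (n : ℕ) (A Cs C : ℝ) (θ : Fin n → ℝ) : Prop := ∃ q, EBRwith n A Cs C θ q

/-- The class `Θ[p]`. -/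
def ThetaClass (n p : ℕ) (A Cs C : ℝ) : Set (Fin n → ℝ) :=
  {θ | θ ∈ nearlyBlack n p ∧ EBR n A Cs C θ}

/-- Smallest witness `q` in the excessive-bias restriction. -/
def qmin (n : ℕ) (A Cs C : ℝ) (θ : Fin n → ℝ) : ℕ := sInf {q | EBRwith n A Cs C θ q}

/-- `p̃(θ₀)`: the number of coordinates above threshold for the smallest witness `q`. -/
def ptilde (n : ℕ) (A Cs C : ℝ) (θ : Fin n → ℝ) : ℕ :=
  ({i | A * Real.sqrt (2 * Real.log ((n : ℝ) / (qmin n A Cs C θ : ℝ))) ≤ |θ i|} :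
    Set (Fin n)).ncard

/-!
Write `ζ = √(2 log (1/τ))`. Outside an event of small probability, the squared bias `‖θ₀ - θ̂‖²`
is at most, and the squared radius at least, of order `n τ ζ`. For the bias, the coordinatewise risk
is `O(τ ζ)` at a zero coordinate and `O(ζ²)` at any other, and `τ ≥ τ_n(p)` gives `p ζ ≤ 2 n τ`, so
Markov's inequality applies. For the radius, Chernoff's bound controls the posterior mass of a small
ball by the product of the Laplace transforms at `1/ζ²` of the marginal posterior laws of
`(θᵢ - θ̂ᵢ)²`. When `θ₀ᵢ = 0` and `y ∈ [ζ/4, ζ/2]`, the marginal posterior given `yᵢ = y` puts mass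
of order at least `τ / (ζ² φ(y))` at distance of order `ζ` from its mean, so the expectation of the
transform is at most `1 - cτ/ζ`. Since at least `n/2` coordinates vanish, the product is at most
`exp (-c n τ / (2ζ)) ≤ exp (-c p / 4) → 0`.
-/

/-! ### Integral inequalities -/

lemma mul_sub_le_integral_of_forall_mem_Icc {f : ℝ → ℝ} (hf : Integrable f) (hf0 : 0 ≤ f)
    {a b k : ℝ} (hab : a ≤ b) (hk : ∀ x ∈ Icc a b, k ≤ f x) : k * (b - a) ≤ ∫ x, f x :=
  calc k * (b - a) = k * volume.real (Icc a b) := by rw [Real.volume_real_Icc_of_le hab]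
    _ ≤ ∫ x in Icc a b, f x := setIntegral_ge_of_const_le_real measurableSet_Icc
        measure_Icc_lt_top.ne hk hf.integrableOn
    _ ≤ ∫ x, f x := setIntegral_le_integral hf (.of_forall hf0)

lemma sq_integral_mul_le {Ω : Type*} {mΩ : MeasurableSpace Ω} {μ : Measure Ω} {f X : Ω → ℝ}
    (hf0 : 0 ≤ f) (hf : Integrable f μ) (hX : Integrable (fun ω => X ω * f ω) μ)
    (hX2 : Integrable (fun ω => X ω ^ 2 * f ω) μ) :
    (∫ ω, X ω * f ω ∂μ) ^ 2 ≤ (∫ ω, f ω ∂μ) * ∫ ω, X ω ^ 2 * f ω ∂μ := by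
  have hquad : ∀ t : ℝ, 0 ≤ (∫ ω, f ω ∂μ) * (t * t) + (-2 * ∫ ω, X ω * f ω ∂μ) * t
      + ∫ ω, X ω ^ 2 * f ω ∂μ := fun t =>
    calc 0 ≤ ∫ ω, (t - X ω) ^ 2 * f ω ∂μ :=
          integral_nonneg fun ω => mul_nonneg (sq_nonneg _) (hf0 ω)
      _ = ∫ ω, t * t * f ω + -2 * t * (X ω * f ω) + X ω ^ 2 * f ω ∂μ := by
          congr 1; ext ω; ring
      _ = _ := by
          rw [integral_add (by fun_prop) hX2, integral_add (by fun_prop) (by fun_prop),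
            integral_const_mul, integral_const_mul]
          ring
  have := discrim_le_zero hquad
  rw [discrim] at this
  linarith

lemma exp_neg_le_inv_one_add {x : ℝ} (hx : 0 ≤ x) : exp (-x) ≤ (1 + x)⁻¹ := by
  rw [exp_neg]
  exact inv_anti₀ (by positivity) (by linarith [add_one_le_exp x])

section Pi

variable {ι : Type*} [Fintype ι] {X : ι → Type*} [∀ i, MeasurableSpace (X i)]
  {μ : ∀ i, Measure (X i)} {f : ∀ i, X i → ℝ}

lemma mul_measureReal_pi_le_sum_integral [∀ i, IsProbabilityMeasure (μ i)]
    (hf0 : ∀ i, 0 ≤ f i) (hf : ∀ i, Integrable (f i) (μ i)) (c : ℝ) :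
    c * (Measure.pi μ).real {x | c ≤ ∑ i, f i (x i)} ≤ ∑ i, ∫ x, f i x ∂μ i := by
  have hint : ∀ i ∈ Finset.univ, Integrable (fun x : ∀ i, X i => f i (x i)) (Measure.pi μ) :=
    fun i _ => integrable_comp_eval (hf i)
  calc c * (Measure.pi μ).real {x | c ≤ ∑ i, f i (x i)}
      ≤ ∫ x, ∑ i, f i (x i) ∂Measure.pi μ := mul_meas_ge_le_integral_of_nonneg
        (.of_forall fun x => Finset.sum_nonneg fun i _ => hf0 i (x i))
        (integrable_finsetSum _ hint) c
    _ = ∑ i, ∫ x, f i x ∂μ i := by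
        rw [integral_finsetSum _ hint]
        exact Finset.sum_congr rfl fun i _ => integral_comp_eval (hf i).aestronglyMeasurable

lemma mul_measureReal_pi_le_prod_integral [∀ i, SigmaFinite (μ i)]
    (hf0 : ∀ i, 0 ≤ f i) (hf : ∀ i, Integrable (f i) (μ i)) (c : ℝ) :
    c * (Measure.pi μ).real {x | c ≤ ∏ i, f i (x i)} ≤ ∏ i, ∫ x, f i x ∂μ i := by
  rw [← integral_fintype_prod_eq_prod]
  exact mul_meas_ge_le_integral_of_nonneg
    (.of_forall fun x => Finset.prod_nonneg fun i _ => hf0 i (x i)) (.fintype_prod_dep hf) c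

lemma setIntegral_prod_le_exp_mul_prod_integral [∀ i, SigmaFinite (μ i)]
    (hf0 : ∀ i, 0 ≤ f i) (hf : ∀ i, Integrable (f i) (μ i)) {w : ∀ i, X i → ℝ}
    (hw0 : ∀ i, 0 ≤ w i) (hw : ∀ i, Measurable (w i)) {t : ℝ} (ht : 0 ≤ t) (R : ℝ) :
    ∫ x in {x | ∑ i, w i (x i) ≤ R}, ∏ i, f i (x i) ∂Measure.pi μ ≤
      exp (t * R) * ∏ i, ∫ x, exp (-(t * w i x)) * f i x ∂μ i := by
  have htilt : ∀ i, Integrable (fun x => exp (-(t * w i x)) * f i x) (μ i) := fun i =>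
    (hf i).bdd_mul (c := 1) (by have := hw i; fun_prop) <| .of_forall fun x => by
      rw [norm_of_nonneg (exp_pos _).le, exp_le_one_iff]
      exact neg_nonpos.2 (mul_nonneg ht (hw0 i x))
  have htilt_pi : Integrable
      (fun x => exp (t * R) * ∏ i, exp (-(t * w i (x i))) * f i (x i)) (Measure.pi μ) :=
    (Integrable.fintype_prod_dep htilt).const_mul _
  have hprod0 : ∀ x : ∀ i, X i, 0 ≤ ∏ i, f i (x i) :=
    fun x => Finset.prod_nonneg fun i _ => hf0 i (x i)
  calc ∫ x in {x | ∑ i, w i (x i) ≤ R}, ∏ i, f i (x i) ∂Measure.pi μ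
      ≤ ∫ x in {x | ∑ i, w i (x i) ≤ R},
          exp (t * R) * ∏ i, exp (-(t * w i (x i))) * f i (x i) ∂Measure.pi μ := by
        refine setIntegral_mono_on (Integrable.fintype_prod_dep hf).integrableOn
          htilt_pi.integrableOn (measurableSet_le (by fun_prop) measurable_const) fun x hx => ?_
        rw [Finset.prod_mul_distrib, ← exp_sum, ← mul_assoc, ← exp_add, Finset.sum_neg_distrib,
          ← Finset.mul_sum]
        refine le_mul_of_one_le_left (hprod0 x) (one_le_exp ?_)
        linarith [mul_le_mul_of_nonneg_left (show ∑ i, w i (x i) ≤ R from hx) ht]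
    _ ≤ ∫ x, exp (t * R) * ∏ i, exp (-(t * w i (x i))) * f i (x i) ∂Measure.pi μ :=
        setIntegral_le_integral htilt_pi <| .of_forall fun x => mul_nonneg (exp_pos _).le <|
          Finset.prod_nonneg fun i _ => mul_nonneg (exp_pos _).le (hf0 i (x i))
    _ = exp (t * R) * ∏ i, ∫ x, exp (-(t * w i x)) * f i x ∂μ i := by
        rw [integral_const_mul,
          integral_fintype_prod_eq_prod fun i x => exp (-(t * w i x)) * f i x]

end Pi

lemma one_sub_le_measureReal_le_mul {Ω : Type*} {mΩ : MeasurableSpace Ω} {P : Measure Ω}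
    [IsProbabilityMeasure P] {d r : Ω → ℝ} (hr : 0 ≤ r) {L s ε δ : ℝ} (hL : 0 ≤ L)
    (hd : P.real {ω | L ^ 2 * s ≤ d ω ^ 2} ≤ ε) (hrad : P.real {ω | r ω ^ 2 ≤ s} ≤ δ) :
    1 - (ε + δ) ≤ P.real {ω | d ω ≤ L * r ω} := by
  have hcover : univ ⊆ {ω | d ω ≤ L * r ω} ∪ ({ω | L ^ 2 * s ≤ d ω ^ 2} ∪ {ω | r ω ^ 2 ≤ s}) := by
    rintro ω -
    by_contra! h
    simp only [mem_union, mem_ofPred_eq, not_or, not_le] at h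
    obtain ⟨hdr, hds, hrs⟩ := h
    have hsq : (L * r ω) ^ 2 ≤ d ω ^ 2 := by
      have : 0 ≤ L * r ω := mul_nonneg hL (hr ω)
      gcongr
    nlinarith [mul_le_mul_of_nonneg_left hrs.le (sq_nonneg L)]
  have hunion := (measureReal_mono (μ := P) hcover).trans (measureReal_union_le _ _)
  have hbad := measureReal_union_le (μ := P) {ω | L ^ 2 * s ≤ d ω ^ 2} {ω | r ω ^ 2 ≤ s}
  rw [probReal_univ] at hunion
  linarith

/-! ### The standard normal density -/

lemma phiN_pos (x : ℝ) : 0 < phiN x := by unfold phiN; positivity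

lemma phiN_neg (x : ℝ) : phiN (-x) = phiN x := by simp [phiN]

@[fun_prop]
lemma continuous_phiN : Continuous phiN := by unfold phiN; fun_prop

lemma phiN_le_exp_div_two (x : ℝ) : phiN x ≤ exp (-(x ^ 2) / 2) / 2 := by
  have hsqrt : 2 ≤ √(2 * π) := Real.le_sqrt_of_sq_le (by linarith [pi_gt_three])
  unfold phiN
  rw [div_eq_inv_mul (exp _)]
  gcongr

lemma exp_div_three_le_phiN (x : ℝ) : exp (-(x ^ 2) / 2) / 3 ≤ phiN x := by
  have hsqrt : √(2 * π) ≤ 3 := Real.sqrt_le_iff.2 ⟨by norm_num, by linarith [pi_lt_four]⟩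
  unfold phiN
  rw [div_eq_inv_mul (exp _)]
  gcongr

lemma phiN_sub (x y : ℝ) : phiN (x - y) = phiN x * exp (x * y - y ^ 2 / 2) := by
  rw [phiN, phiN, mul_assoc, ← exp_add]
  ring_nf

lemma phiN_le_half (x : ℝ) : phiN x ≤ 1 / 2 := by
  have : exp (-(x ^ 2) / 2) ≤ 1 := exp_le_one_iff.2 (by linarith [sq_nonneg x])
  linarith [phiN_le_exp_div_two x]

lemma one_div_six_le_phiN {x : ℝ} (hx : |x| ≤ 1) : 1 / 6 ≤ phiN x := by
  have hx2 : x ^ 2 ≤ 1 := (sq_le_one_iff_abs_le_one x).2 hx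
  linarith [exp_div_three_le_phiN x, add_one_le_exp (-(x ^ 2) / 2)]

lemma phiN_le_four_div (x : ℝ) : phiN x ≤ 4 / (2 + x ^ 2) ^ 2 := by
  have hexp : (2 + x ^ 2) ^ 2 / 8 ≤ exp (x ^ 2 / 2) := by
    linarith [quadratic_le_exp_of_nonneg (x := x ^ 2 / 2) (by positivity)]
  calc phiN x ≤ (exp (x ^ 2 / 2))⁻¹ / 2 := by
        rw [← exp_neg, ← neg_div]; exact phiN_le_exp_div_two x
    _ ≤ ((2 + x ^ 2) ^ 2 / 8)⁻¹ / 2 := by gcongr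
    _ = 4 / (2 + x ^ 2) ^ 2 := by field_simp; norm_num

lemma phiN_sub_eq_gaussianPDFReal (t y : ℝ) : phiN (y - t) = gaussianPDFReal t 1 y := by
  simp [phiN, gaussianPDFReal]

lemma phiN_eq_gaussianPDFReal : phiN = gaussianPDFReal 0 1 := by
  ext x
  rw [← phiN_sub_eq_gaussianPDFReal, sub_zero]

lemma integrable_phiN : Integrable phiN :=
  phiN_eq_gaussianPDFReal ▸ integrable_gaussianPDFReal 0 1

lemma integral_phiN : ∫ x, phiN x = 1 :=
  phiN_eq_gaussianPDFReal ▸ integral_gaussianPDFReal_eq_one 0 one_ne_zero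

lemma integral_gaussianReal_eq_integral_phiN (t : ℝ) (f : ℝ → ℝ) :
    ∫ y, f y ∂gaussianReal t 1 = ∫ y, phiN (y - t) * f y := by
  simp_rw [integral_gaussianReal_eq_integral_smul one_ne_zero, smul_eq_mul,
    phiN_sub_eq_gaussianPDFReal]

lemma integrable_gaussianReal_iff {t : ℝ} {f : ℝ → ℝ} :
    Integrable f (gaussianReal t 1) ↔ Integrable fun y => phiN (y - t) * f y := by
  rw [gaussianReal_of_var_ne_zero _ one_ne_zero, integrable_withDensity_iff_integrable_smul'
    (by fun_prop) (.of_forall fun _ => gaussianPDF_lt_top)]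
  simp_rw [toReal_gaussianPDF, smul_eq_mul, phiN_sub_eq_gaussianPDFReal]

lemma integrable_sq_sub_gaussianReal (t : ℝ) (v : ℝ≥0) :
    Integrable (fun y => (y - t) ^ 2) (gaussianReal t v) :=
  ((memLp_id_gaussianReal (μ := t) (v := v) 2).sub (memLp_const t)).integrable_sq

lemma integral_sq_sub_gaussianReal (t : ℝ) (v : ℝ≥0) :
    ∫ y, (y - t) ^ 2 ∂gaussianReal t v = v := by
  rw [← variance_fun_id_gaussianReal (μ := t), variance_eq_integral (by fun_prop),
    integral_id_gaussianReal]

lemma integrable_sq_mul_phiN : Integrable fun x => x ^ 2 * phiN x := by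
  simpa [mul_comm] using integrable_gaussianReal_iff.1 (integrable_sq_sub_gaussianReal 0 1)

lemma integral_sq_mul_phiN : ∫ x, x ^ 2 * phiN x = 1 := by
  simpa [integral_gaussianReal_eq_integral_phiN, mul_comm] using integral_sq_sub_gaussianReal 0 1

lemma hasDerivAt_phiN (x : ℝ) : HasDerivAt phiN (-x * phiN x) x := by
  have hexponent : HasDerivAt (fun x : ℝ => -(x ^ 2) / 2) (-x) x := by
    refine ((hasDerivAt_pow 2 x).fun_neg.div_const 2).congr_deriv ?_
    norm_num; ring
  refine (hexponent.exp.const_mul (√(2 * π))⁻¹).congr_deriv ?_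
  rw [phiN]; ring

lemma integrable_sq_sub_one_mul_phiN : Integrable fun x => (x ^ 2 - 1) * phiN x := by
  simp_rw [sub_mul, one_mul]
  exact integrable_sq_mul_phiN.sub integrable_phiN

lemma setIntegral_compl_Icc_sq_sub_one_mul_phiN {a : ℝ} (ha : 0 ≤ a) :
    ∫ x in (Icc (-a) a)ᶜ, (x ^ 2 - 1) * phiN x = 2 * a * phiN a := by
  have hderiv : ∀ x : ℝ, HasDerivAt (fun x => -(x * phiN x)) ((x ^ 2 - 1) * phiN x) x := by
    intro x
    refine ((hasDerivAt_id' x).fun_mul (hasDerivAt_phiN x)).fun_neg.congr_deriv ?_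
    ring
  have hinside : ∫ x in Icc (-a) a, (x ^ 2 - 1) * phiN x = -(2 * a * phiN a) := by
    rw [integral_Icc_eq_integral_Ioc, ← intervalIntegral.integral_of_le (by linarith),
      intervalIntegral.integral_eq_sub_of_hasDerivAt (fun x _ => hderiv x)
        integrable_sq_sub_one_mul_phiN.intervalIntegrable, phiN_neg]
    ring
  have htotal : ∫ x, (x ^ 2 - 1) * phiN x = 0 := by
    simp_rw [sub_mul, one_mul]
    rw [integral_sub integrable_sq_mul_phiN integrable_phiN, integral_sq_mul_phiN, integral_phiN,
      sub_self]
  linarith [integral_add_compl measurableSet_Icc integrable_sq_sub_one_mul_phiN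
    (s := Icc (-a) a)]

/-! ### The horseshoe density -/

/-- The joint prior density of a coordinate `θ` and its half-Cauchy local scale `l`, whose
`θ`-marginal over `0 < l` is the horseshoe density `gHS τ`. -/
def horseshoeKernel (τ θ l : ℝ) : ℝ := phiN (θ / (l * τ)) / (l * τ) * (2 / (π * (1 + l ^ 2)))

@[fun_prop]
lemma measurable_uncurry_horseshoeKernel (τ : ℝ) :
    Measurable (Function.uncurry (horseshoeKernel τ)) := by
  unfold horseshoeKernel Function.uncurry
  fun_prop

@[fun_prop]
lemma measurable_gHS (τ : ℝ) : Measurable (gHS τ) :=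
  (measurable_uncurry_horseshoeKernel τ).stronglyMeasurable.integral_prod_right.measurable

lemma gHS_neg (τ θ : ℝ) : gHS τ (-θ) = gHS τ θ := by
  simp only [gHS, neg_div, phiN_neg]

section Horseshoe

variable {τ : ℝ}

lemma horseshoeKernel_nonneg (hτ : 0 < τ) (θ : ℝ) {l : ℝ} (hl : 0 < l) :
    0 ≤ horseshoeKernel τ θ l := by
  have := phiN_pos (θ / (l * τ))
  unfold horseshoeKernel
  positivity

lemma gHS_nonneg (hτ : 0 < τ) (θ : ℝ) : 0 ≤ gHS τ θ :=
  setIntegral_nonneg measurableSet_Ioi fun _ hl => horseshoeKernel_nonneg hτ θ hl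

lemma integral_horseshoeKernel_left (hτ : 0 < τ) {l : ℝ} (hl : 0 < l) :
    ∫ θ, horseshoeKernel τ θ l = 2 / π * (1 + l ^ 2)⁻¹ := by
  have hscale : 0 < l * τ := mul_pos hl hτ
  unfold horseshoeKernel
  rw [integral_mul_const, integral_div, Measure.integral_comp_div, integral_phiN,
    abs_of_pos hscale, smul_eq_mul]
  field_simp

lemma integrable_uncurry_horseshoeKernel (hτ : 0 < τ) :
    Integrable (Function.uncurry (horseshoeKernel τ))
      ((volume : Measure ℝ).prod (volume.restrict (Ioi 0))) := by
  rw [integrable_prod_iff' (by fun_prop)]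
  constructor
  · filter_upwards [ae_restrict_mem measurableSet_Ioi] with l (hl : 0 < l)
    simp only [Function.uncurry_apply_pair, horseshoeKernel]
    exact ((integrable_phiN.comp_div (by positivity)).div_const _).mul_const _
  · refine (integrable_inv_one_add_sq.const_mul (2 / π)).integrableOn.congr ?_
    filter_upwards [ae_restrict_mem measurableSet_Ioi] with l hl
    simp_rw [Function.uncurry_apply_pair, norm_of_nonneg (horseshoeKernel_nonneg hτ _ hl)]
    exact (integral_horseshoeKernel_left hτ hl).symm

lemma integrable_gHS (hτ : 0 < τ) : Integrable (gHS τ) :=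
  (integrable_uncurry_horseshoeKernel hτ).integral_prod_left

lemma integral_gHS (hτ : 0 < τ) : ∫ θ, gHS τ θ = 1 :=
  calc ∫ θ, gHS τ θ = ∫ l in Ioi 0, ∫ θ, horseshoeKernel τ θ l :=
        integral_integral_swap (integrable_uncurry_horseshoeKernel hτ)
    _ = ∫ l in Ioi 0, 2 / π * (1 + l ^ 2)⁻¹ :=
        setIntegral_congr_fun measurableSet_Ioi fun l hl => integral_horseshoeKernel_left hτ hl
    _ = 1 := by rw [integral_const_mul, integral_Ioi_inv_one_add_sq]; simp

/-- The derivative in `l` of `-τ / (2 * τ ^ 2 * l ^ 2 + θ ^ 2)`, which dominates the horseshoe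
kernel and makes the tail bound `gHS τ θ ≤ τ / θ ^ 2` an explicit integral. -/
def horseshoeMajorant (τ θ l : ℝ) : ℝ := 4 * τ ^ 3 * l / (2 * τ ^ 2 * l ^ 2 + θ ^ 2) ^ 2

lemma horseshoeKernel_le_horseshoeMajorant (hτ : 0 < τ) {θ : ℝ} (hθ : θ ≠ 0) {l : ℝ}
    (hl : 0 < l) : horseshoeKernel τ θ l ≤ horseshoeMajorant τ θ l := by
  have hcauchy : 2 / (π * (1 + l ^ 2)) ≤ 1 / l ^ 2 := by
    rw [div_le_div_iff₀ (by positivity) (by positivity)]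
    nlinarith [pi_gt_three, sq_nonneg l]
  calc horseshoeKernel τ θ l
      ≤ 4 / (2 + (θ / (l * τ)) ^ 2) ^ 2 / (l * τ) * (1 / l ^ 2) := by
        unfold horseshoeKernel
        gcongr
        exact phiN_le_four_div _
    _ = horseshoeMajorant τ θ l := by
        unfold horseshoeMajorant
        field_simp

lemma integral_horseshoeMajorant (hτ : 0 < τ) {θ : ℝ} (hθ : θ ≠ 0) :
    IntegrableOn (horseshoeMajorant τ θ) (Ioi 0) ∧
      ∫ l in Ioi 0, horseshoeMajorant τ θ l = τ / θ ^ 2 := by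
  have hderiv : ∀ l ∈ Ici (0 : ℝ), HasDerivAt (fun l => -τ / (2 * τ ^ 2 * l ^ 2 + θ ^ 2))
      (horseshoeMajorant τ θ l) l := by
    intro l _
    refine ((hasDerivAt_const l (-τ)).fun_div (((hasDerivAt_pow 2 l).const_mul
      (2 * τ ^ 2)).add_const (θ ^ 2)) (by positivity)).congr_deriv ?_
    unfold horseshoeMajorant
    norm_num
    ring
  have hnonneg : ∀ l ∈ Ioi (0 : ℝ), 0 ≤ horseshoeMajorant τ θ l := by
    intro l (hl : 0 < l)
    unfold horseshoeMajorant
    positivity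
  have hlim : Tendsto (fun l : ℝ => -τ / (2 * τ ^ 2 * l ^ 2 + θ ^ 2)) atTop (nhds 0) :=
    tendsto_const_nhds.div_atTop <| tendsto_atTop_add_const_right _ _ <|
      (tendsto_pow_atTop two_ne_zero).const_mul_atTop (by positivity)
  refine ⟨integrableOn_Ioi_deriv_of_nonneg' hderiv hnonneg hlim, ?_⟩
  rw [integral_Ioi_of_hasDerivAt_of_nonneg' hderiv hnonneg hlim]
  ring

lemma integrableOn_horseshoeKernel (hτ : 0 < τ) {θ : ℝ} (hθ : θ ≠ 0) :
    IntegrableOn (horseshoeKernel τ θ) (Ioi 0) := by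
  refine (integral_horseshoeMajorant hτ hθ).1.mono'
    (measurable_uncurry_horseshoeKernel τ).of_uncurry_left.aestronglyMeasurable ?_
  filter_upwards [ae_restrict_mem measurableSet_Ioi] with l hl
  rw [norm_of_nonneg (horseshoeKernel_nonneg hτ θ hl)]
  exact horseshoeKernel_le_horseshoeMajorant hτ hθ hl

lemma gHS_le_div_sq (hτ : 0 < τ) {θ : ℝ} (hθ : θ ≠ 0) : gHS τ θ ≤ τ / θ ^ 2 := by
  rw [← (integral_horseshoeMajorant hτ hθ).2]
  exact setIntegral_mono_on (integrableOn_horseshoeKernel hτ hθ)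
    (integral_horseshoeMajorant hτ hθ).1 measurableSet_Ioi
    fun l hl => horseshoeKernel_le_horseshoeMajorant hτ hθ hl

lemma sq_mul_gHS_le (hτ : 0 < τ) (θ : ℝ) : θ ^ 2 * gHS τ θ ≤ τ := by
  rcases eq_or_ne θ 0 with rfl | hθ
  · simpa using hτ.le
  · calc θ ^ 2 * gHS τ θ ≤ θ ^ 2 * (τ / θ ^ 2) := by gcongr; exact gHS_le_div_sq hτ hθ
      _ = τ := by field_simp

lemma horseshoeKernel_ge (hτ : 0 < τ) {θ l : ℝ} (hθ : τ ≤ θ) (hl : l ∈ Icc (θ / τ) (2 * θ / τ)) :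
    τ ^ 2 / (120 * θ ^ 3) ≤ horseshoeKernel τ θ l := by
  have hθ0 : 0 < θ := hτ.trans_le hθ
  have hlτ : θ ≤ l * τ := (div_le_iff₀ hτ).1 hl.1
  have hlτ' : l * τ ≤ 2 * θ := (le_div_iff₀ hτ).1 hl.2
  have hl0 : 0 < l * τ := hθ0.trans_le hlτ
  have hnormal : 1 / 6 ≤ phiN (θ / (l * τ)) := one_div_six_le_phiN <| by
    rwa [abs_of_pos (div_pos hθ0 hl0), div_le_one hl0]
  have hcauchy : 2 / (4 * (5 * θ ^ 2 / τ ^ 2)) ≤ 2 / (π * (1 + l ^ 2)) := by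
    have hscale : 1 + l ^ 2 ≤ 5 * θ ^ 2 / τ ^ 2 := by
      rw [le_div_iff₀ (by positivity)]
      nlinarith
    gcongr
    exact pi_lt_four.le
  calc τ ^ 2 / (120 * θ ^ 3) = 1 / 6 / (2 * θ) * (2 / (4 * (5 * θ ^ 2 / τ ^ 2))) := by
        field_simp
        norm_num
    _ ≤ horseshoeKernel τ θ l := by
        unfold horseshoeKernel
        gcongr

lemma div_sq_le_gHS (hτ : 0 < τ) {θ : ℝ} (hθ : τ ≤ θ) : τ / (120 * θ ^ 2) ≤ gHS τ θ := by
  have hθ0 : 0 < θ := hτ.trans_le hθ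
  have hscales : Icc (θ / τ) (2 * θ / τ) ⊆ Ioi 0 :=
    fun l hl => (div_pos hθ0 hτ).trans_le hl.1
  have hint := integrableOn_horseshoeKernel hτ hθ0.ne'
  calc τ / (120 * θ ^ 2)
      = τ ^ 2 / (120 * θ ^ 3) * volume.real (Icc (θ / τ) (2 * θ / τ)) := by
        rw [Real.volume_real_Icc_of_le (by gcongr; linarith)]
        field_simp
        ring
    _ ≤ ∫ l in Icc (θ / τ) (2 * θ / τ), horseshoeKernel τ θ l :=
        setIntegral_ge_of_const_le_real measurableSet_Icc measure_Icc_lt_top.ne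
          (fun l hl => horseshoeKernel_ge hτ hθ hl) (hint.mono_set hscales)
    _ ≤ gHS τ θ := setIntegral_mono_set hint
        (ae_restrict_of_forall_mem measurableSet_Ioi fun l hl => horseshoeKernel_nonneg hτ θ hl)
        hscales.eventuallyLE

end Horseshoe

/-! ### Posterior marginals -/

@[fun_prop]
lemma measurable_uncurry_postDens (τ : ℝ) : Measurable (Function.uncurry (postDens τ)) := by
  unfold postDens Function.uncurry
  fun_prop

@[fun_prop]
lemma measurable_margDens (τ : ℝ) : Measurable (margDens τ) :=
  (measurable_uncurry_postDens τ).stronglyMeasurable.integral_prod_right.measurable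

@[fun_prop]
lemma measurable_postMean (τ : ℝ) : Measurable (postMean τ) := by
  have hnum : Measurable (Function.uncurry fun y θ => θ * postDens τ y θ) := by
    have := measurable_uncurry_postDens τ
    unfold Function.uncurry at *
    fun_prop
  exact hnum.stronglyMeasurable.integral_prod_right.measurable.div (measurable_margDens τ)

lemma postDens_neg_neg (τ y θ : ℝ) : postDens τ (-y) (-θ) = postDens τ y θ := by
  rw [postDens, postDens, gHS_neg, ← phiN_neg, neg_sub_neg, neg_sub]

lemma margDens_neg (τ y : ℝ) : margDens τ (-y) = margDens τ y := by
  rw [margDens, ← integral_neg_eq_self]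
  simp only [postDens_neg_neg, margDens]

section Posterior

variable {τ : ℝ}

lemma postDens_nonneg (hτ : 0 < τ) (y θ : ℝ) : 0 ≤ postDens τ y θ :=
  mul_nonneg (phiN_pos _).le (gHS_nonneg hτ θ)

lemma sq_mul_postDens_le (hτ : 0 < τ) (y θ : ℝ) : θ ^ 2 * postDens τ y θ ≤ τ * phiN (y - θ) := by
  rw [postDens, mul_left_comm, mul_comm τ]
  exact mul_le_mul_of_nonneg_left (sq_mul_gHS_le hτ θ) (phiN_pos _).le

lemma integrable_mul_postDens (hτ : 0 < τ) (y : ℝ) {w : ℝ → ℝ} (hw : Measurable w) {K : ℝ}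
    (hK : ∀ θ, |w θ| ≤ K * (1 + θ ^ 2)) : Integrable fun θ => w θ * postDens τ y θ := by
  have hK0 : 0 ≤ K := (abs_nonneg _).trans (by simpa using hK 0)
  have := (measurable_uncurry_postDens τ).of_uncurry_left (x := y)
  refine ((((integrable_gHS hτ).const_mul (1 / 2)).add
    ((integrable_phiN.comp_sub_left y).const_mul τ)).const_mul K).mono'
    (by fun_prop) (.of_forall fun θ => ?_)
  have hg : postDens τ y θ ≤ 1 / 2 * gHS τ θ :=
    mul_le_mul_of_nonneg_right (phiN_le_half _) (gHS_nonneg hτ θ)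
  calc ‖w θ * postDens τ y θ‖ = |w θ| * postDens τ y θ := by
        rw [norm_mul, norm_of_nonneg (postDens_nonneg hτ y θ), norm_eq_abs]
    _ ≤ K * (1 + θ ^ 2) * postDens τ y θ :=
        mul_le_mul_of_nonneg_right (hK θ) (postDens_nonneg hτ y θ)
    _ = K * (postDens τ y θ + θ ^ 2 * postDens τ y θ) := by ring
    _ ≤ K * (1 / 2 * gHS τ θ + τ * phiN (y - θ)) := by
        gcongr ?_ * (?_ + ?_)
        exact sq_mul_postDens_le hτ y θ

lemma integrable_postDens (hτ : 0 < τ) (y : ℝ) : Integrable (postDens τ y) := by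
  simpa using integrable_mul_postDens hτ y (w := 1) measurable_one (K := 1)
    fun θ => by simp [sq_nonneg]

lemma integrable_id_mul_postDens (hτ : 0 < τ) (y : ℝ) :
    Integrable fun θ => θ * postDens τ y θ :=
  integrable_mul_postDens hτ y measurable_id (K := 1) fun θ =>
    abs_le.2 ⟨by nlinarith [sq_nonneg (θ + 1)], by nlinarith [sq_nonneg (θ - 1)]⟩

lemma integrable_sq_sub_mul_postDens (hτ : 0 < τ) (y c : ℝ) :
    Integrable fun θ => (c - θ) ^ 2 * postDens τ y θ :=
  integrable_mul_postDens hτ y (by fun_prop) (K := 2 * (1 + c ^ 2)) fun θ => by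
    rw [abs_of_nonneg (sq_nonneg _)]
    nlinarith [sq_nonneg (c + θ), sq_nonneg (c * θ)]

lemma mul_exp_div_le_postDens (hτ : 0 < τ) {y θ : ℝ} (hy : 0 ≤ y) (hθ : θ ∈ Icc τ (2 * τ)) :
    phiN y * exp (-(2 * τ ^ 2)) / (480 * τ) ≤ postDens τ y θ := by
  obtain ⟨hτθ, hθτ⟩ := hθ
  have hθ0 : 0 < θ := hτ.trans_le hτθ
  have hφ : phiN y * exp (-(2 * τ ^ 2)) ≤ phiN (y - θ) := by
    have := phiN_pos y
    rw [phiN_sub]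
    gcongr
    nlinarith [mul_nonneg hy hθ0.le]
  calc phiN y * exp (-(2 * τ ^ 2)) / (480 * τ)
      = phiN y * exp (-(2 * τ ^ 2)) * (τ / (120 * (2 * τ) ^ 2)) := by field_simp; ring
    _ ≤ phiN (y - θ) * (τ / (120 * θ ^ 2)) := by have := phiN_pos (y - θ); gcongr
    _ ≤ postDens τ y θ := mul_le_mul_of_nonneg_left (div_sq_le_gHS hτ hτθ) (phiN_pos _).le

lemma mul_exp_div_le_margDens (hτ : 0 < τ) (y : ℝ) :
    phiN y * exp (-(2 * τ ^ 2)) / 480 ≤ margDens τ y := by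
  wlog hy : 0 ≤ y generalizing y
  · simpa only [phiN_neg, margDens_neg] using this (-y) (by linarith)
  refine le_of_eq_of_le ?_ (mul_sub_le_integral_of_forall_mem_Icc (integrable_postDens hτ y)
    (postDens_nonneg hτ y) (by linarith) fun θ hθ => mul_exp_div_le_postDens hτ hy hθ)
  field_simp
  ring

lemma margDens_pos (hτ : 0 < τ) (y : ℝ) : 0 < margDens τ y :=
  lt_of_lt_of_le (by have := phiN_pos y; positivity) (mul_exp_div_le_margDens hτ y)

lemma phiN_le_margDens (hτ : 0 < τ) (hτ' : τ ≤ 1 / 2) (y : ℝ) :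
    phiN y ≤ 960 * margDens τ y := by
  have hexp : 1 / 2 ≤ exp (-(2 * τ ^ 2)) := by nlinarith [one_sub_le_exp_neg (2 * τ ^ 2)]
  nlinarith [mul_exp_div_le_margDens hτ y, mul_le_mul_of_nonneg_left hexp (phiN_pos y).le]

lemma div_sq_le_postDens (hτ : 0 < τ) {y θ : ℝ} (hτθ : τ ≤ θ) (hθ : θ ∈ Icc y (y + 1)) :
    τ / (720 * (y + 1) ^ 2) ≤ postDens τ y θ := by
  obtain ⟨hyθ, hθy⟩ := hθ
  have hφ : 1 / 6 ≤ phiN (y - θ) := one_div_six_le_phiN (abs_le.2 ⟨by linarith, by linarith⟩)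
  have hθ0 : 0 < θ := by linarith
  have hy : 0 < y + 1 := by linarith
  calc τ / (720 * (y + 1) ^ 2) = 1 / 6 * (τ / (120 * (y + 1) ^ 2)) := by
        field_simp
        norm_num
    _ ≤ phiN (y - θ) * (τ / (120 * θ ^ 2)) := by gcongr
    _ ≤ postDens τ y θ := mul_le_mul_of_nonneg_left (div_sq_le_gHS hτ hτθ) (phiN_pos _).le

lemma div_sq_le_margDens (hτ : 0 < τ) (hτ' : τ ≤ 1 / 2) (y : ℝ) :
    τ / (|y| + 1) ^ 2 ≤ 1440 * margDens τ y := by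
  wlog hy : 0 ≤ y generalizing y
  · simpa only [abs_neg, margDens_neg] using this (-y) (by linarith)
  have hmass : τ / (720 * (y + 1) ^ 2) * (y + 1 - (y + 1 / 2)) ≤ margDens τ y :=
    mul_sub_le_integral_of_forall_mem_Icc (integrable_postDens hτ y) (postDens_nonneg hτ y)
      (by linarith) fun θ hθ =>
        div_sq_le_postDens hτ (by linarith [hθ.1]) ⟨by linarith [hθ.1], hθ.2⟩
  rw [abs_of_nonneg hy]
  calc τ / (y + 1) ^ 2 = 1440 * (τ / (720 * (y + 1) ^ 2) * (y + 1 - (y + 1 / 2))) := by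
        field_simp
        ring
    _ ≤ 1440 * margDens τ y := by gcongr

lemma sq_sub_postMean_mul_margDens_le (hτ : 0 < τ) (y c : ℝ) :
    (c - postMean τ y) ^ 2 * margDens τ y ≤ ∫ θ, (c - θ) ^ 2 * postDens τ y θ := by
  have hψ := margDens_pos hτ y
  have hf := integrable_postDens hτ y
  have hθf := integrable_id_mul_postDens hτ y
  have hdiff : Integrable fun θ => (c - θ) * postDens τ y θ := by
    simp_rw [sub_mul]
    exact (hf.const_mul c).sub hθf
  have hcentre : ∫ θ, (c - θ) * postDens τ y θ = (c - postMean τ y) * margDens τ y := by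
    simp_rw [sub_mul]
    rw [integral_sub (hf.const_mul c) hθf, integral_const_mul, postMean,
      div_mul_cancel₀ _ hψ.ne', margDens]
  have hcs := sq_integral_mul_le (X := fun θ => c - θ) (postDens_nonneg hτ y) hf hdiff
    (integrable_sq_sub_mul_postDens hτ y c)
  rw [hcentre, ← margDens] at hcs
  refine le_of_mul_le_mul_left ?_ hψ
  linarith

lemma sq_postMean_mul_phiN_le (hτ : 0 < τ) (hτ' : τ ≤ 1 / 2) (y : ℝ) :
    postMean τ y ^ 2 * phiN y ≤ 960 * τ := by
  have hsecond : ∫ θ, (0 - θ) ^ 2 * postDens τ y θ ≤ τ :=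
    calc ∫ θ, (0 - θ) ^ 2 * postDens τ y θ ≤ ∫ θ, τ * phiN (y - θ) :=
          integral_mono (integrable_sq_sub_mul_postDens hτ y 0)
            ((integrable_phiN.comp_sub_left y).const_mul τ)
            fun θ => by simpa using sq_mul_postDens_le hτ y θ
      _ = τ := by
          rw [integral_const_mul, integral_sub_left_eq_self (fun u => phiN u), integral_phiN,
            mul_one]
  have hjensen := sq_sub_postMean_mul_margDens_le hτ y 0
  nlinarith [mul_le_mul_of_nonneg_left (phiN_le_margDens hτ hτ' y) (sq_nonneg (postMean τ y))]

end Posterior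

/-! ### Quadratic risk of the posterior mean -/

section Risk

variable {τ : ℝ}

lemma exp_neg_sq_zet_div_two (hτ : 0 < τ) (hζ : 0 < zet τ) : exp (-(zet τ ^ 2) / 2) = τ := by
  have hlog : 0 < 2 * log (1 / τ) := Real.sqrt_pos.1 hζ
  rw [zet, Real.sq_sqrt hlog.le, one_div, log_inv, mul_neg, neg_neg,
    mul_div_cancel_left₀ _ two_ne_zero, exp_log hτ]

lemma le_one_div_fifteen_of_three_le_zet (hτ : 0 < τ) (hζ : 3 ≤ zet τ) : τ ≤ 1 / 15 := by
  have hsq : 3 ^ 2 ≤ zet τ ^ 2 := by gcongr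
  have hexp : 15 ≤ exp (zet τ ^ 2 / 2) := by
    nlinarith [quadratic_le_exp_of_nonneg (x := zet τ ^ 2 / 2) (by positivity)]
  rw [← exp_neg_sq_zet_div_two hτ (by linarith), neg_div, exp_neg, one_div]
  exact inv_anti₀ (by norm_num) hexp

lemma pow_four_mul_phiN_le (hτ : 0 < τ) (hζ : 0 < zet τ) {u : ℝ} (hu : 2 * zet τ ≤ |u|) :
    u ^ 4 * phiN u ≤ 16 * τ := by
  have hsq : 4 * zet τ ^ 2 ≤ u ^ 2 := by
    rw [← sq_abs u]
    nlinarith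
  have hhalf : exp (-(u ^ 2 / 4)) ≤ τ := by
    rw [← exp_neg_sq_zet_div_two hτ hζ]
    gcongr
    nlinarith [sq_nonneg (zet τ)]
  have hpow : u ^ 4 ≤ 32 * exp (u ^ 2 / 4) := by
    nlinarith [quadratic_le_exp_of_nonneg (x := u ^ 2 / 4) (by positivity), sq_nonneg u]
  calc u ^ 4 * phiN u
      ≤ 32 * exp (u ^ 2 / 4) * (exp (-(u ^ 2 / 4)) * exp (-(u ^ 2 / 4)) / 2) := by
        rw [← exp_add]
        gcongr
        · exact (phiN_pos u).le
        · exact (phiN_le_exp_div_two u).trans_eq (by ring_nf)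
    _ = 16 * (exp (u ^ 2 / 4) * exp (-(u ^ 2 / 4))) * exp (-(u ^ 2 / 4)) := by ring
    _ ≤ 16 * τ := by
        rw [← exp_add, add_neg_cancel, exp_zero, mul_one]
        gcongr

/- The three terms cover `|y - θ| ≤ 2ζ`, then `y` far from `θ` by the Gaussian decay of the
likelihood, and `|θ| ≥ |y| / 2` by the tail of the prior. -/
lemma sq_sub_mul_postDens_le (hτ : 0 < τ) (hζ : 3 ≤ zet τ) (y θ : ℝ) :
    (y - θ) ^ 2 * postDens τ y θ ≤ 4 * zet τ ^ 2 * postDens τ y θ +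
      τ / (|y| + 1) ^ 2 * (144 * gHS τ θ + 9 * ((y - θ) ^ 2 * phiN (y - θ))) := by
  set u := y - θ
  have hf := postDens_nonneg hτ y θ
  have hg := gHS_nonneg hτ θ
  have hφ := phiN_pos u
  have hy := abs_nonneg y
  rcases le_total |u| (2 * zet τ) with hu | hu
  · have hsq : u ^ 2 ≤ 4 * zet τ ^ 2 := by
      rw [← sq_abs u]
      nlinarith [abs_nonneg u]
    exact (mul_le_mul_of_nonneg_right hsq hf).trans (le_add_of_nonneg_right (by positivity))
  refine le_add_of_nonneg_of_le (by positivity) ?_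
  have hτy : 0 < τ / (|y| + 1) ^ 2 := by positivity
  rcases le_total |y| (2 * |u|) with hyu | hyu
  · have hlik : u ^ 2 * phiN u ≤ 144 * (τ / (|y| + 1) ^ 2) := by
      rw [← mul_div_assoc, le_div_iff₀ (by positivity)]
      have hy3 : (|y| + 1) ^ 2 ≤ 9 * u ^ 2 := by
        rw [← sq_abs u]
        nlinarith
      nlinarith [pow_four_mul_phiN_le hτ (by linarith) hu,
        mul_le_mul_of_nonneg_left hy3 (by positivity : 0 ≤ u ^ 2 * phiN u)]
    calc u ^ 2 * postDens τ y θ = u ^ 2 * phiN u * gHS τ θ := by rw [postDens, mul_assoc]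
      _ ≤ 144 * (τ / (|y| + 1) ^ 2) * gHS τ θ := by gcongr
      _ ≤ _ := by nlinarith [mul_nonneg hτy.le (by positivity : 0 ≤ 9 * (u ^ 2 * phiN u))]
  · have hθ : (|y| + 1) / 3 ≤ |θ| := by
      have : |y| ≤ |u| + |θ| := by simpa [u] using abs_add_le u θ
      linarith
    have hprior : gHS τ θ ≤ 9 * (τ / (|y| + 1) ^ 2) :=
      calc gHS τ θ ≤ τ / |θ| ^ 2 := by
            rw [sq_abs]
            exact gHS_le_div_sq hτ (abs_pos.1 (by linarith))
        _ ≤ τ / ((|y| + 1) / 3) ^ 2 := by gcongr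
        _ = 9 * (τ / (|y| + 1) ^ 2) := by field_simp; norm_num
    calc u ^ 2 * postDens τ y θ = u ^ 2 * phiN u * gHS τ θ := by rw [postDens, mul_assoc]
      _ ≤ u ^ 2 * phiN u * (9 * (τ / (|y| + 1) ^ 2)) := by gcongr
      _ ≤ _ := by nlinarith [mul_nonneg hτy.le (by positivity : 0 ≤ 144 * gHS τ θ)]

lemma integral_sq_sub_mul_postDens_le (hτ : 0 < τ) (hζ : 3 ≤ zet τ) (y : ℝ) :
    ∫ θ, (y - θ) ^ 2 * postDens τ y θ ≤ 25000 * zet τ ^ 2 * margDens τ y := by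
  have hτ' := le_one_div_fifteen_of_three_le_zet hτ hζ
  have hf := (integrable_postDens hτ y).const_mul (4 * zet τ ^ 2)
  have hg := (integrable_gHS hτ).const_mul 144
  have hφ := (integrable_sq_mul_phiN.comp_sub_left y).const_mul 9
  have hgφ : Integrable fun θ =>
      τ / (|y| + 1) ^ 2 * (144 * gHS τ θ + 9 * ((y - θ) ^ 2 * phiN (y - θ))) :=
    (hg.add hφ).const_mul _
  have hψ := margDens_pos hτ y
  calc ∫ θ, (y - θ) ^ 2 * postDens τ y θ
      ≤ ∫ θ, 4 * zet τ ^ 2 * postDens τ y θ +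
          τ / (|y| + 1) ^ 2 * (144 * gHS τ θ + 9 * ((y - θ) ^ 2 * phiN (y - θ))) :=
        integral_mono (integrable_sq_sub_mul_postDens hτ y y) (hf.add hgφ)
          (sq_sub_mul_postDens_le hτ hζ y)
    _ = 4 * zet τ ^ 2 * margDens τ y + 153 * (τ / (|y| + 1) ^ 2) := by
        rw [integral_add hf hgφ, integral_const_mul, integral_const_mul,
          integral_add hg hφ, integral_const_mul, integral_const_mul, integral_gHS hτ,
          integral_sub_left_eq_self (fun u => u ^ 2 * phiN u), integral_sq_mul_phiN, margDens]
        ring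
    _ ≤ 25000 * zet τ ^ 2 * margDens τ y := by
        have hζψ : 9 * margDens τ y ≤ zet τ ^ 2 * margDens τ y := by gcongr; nlinarith
        linarith [div_sq_le_margDens hτ (by linarith) y]

lemma sq_sub_postMean_le (hτ : 0 < τ) (hζ : 3 ≤ zet τ) (y : ℝ) :
    (y - postMean τ y) ^ 2 ≤ 25000 * zet τ ^ 2 :=
  le_of_mul_le_mul_right ((sq_sub_postMean_mul_margDens_le hτ y y).trans
    (integral_sq_sub_mul_postDens_le hτ hζ y)) (margDens_pos hτ y)

lemma sq_sub_postMean_le_add (hτ : 0 < τ) (hζ : 3 ≤ zet τ) (t y : ℝ) :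
    (t - postMean τ y) ^ 2 ≤ 2 * (y - t) ^ 2 + 50000 * zet τ ^ 2 := by
  nlinarith [sq_sub_postMean_le hτ hζ y, sq_nonneg ((y - t) + (y - postMean τ y))]

lemma integrable_sq_sub_postMean (hτ : 0 < τ) (hζ : 3 ≤ zet τ) (t : ℝ) :
    Integrable (fun y => (t - postMean τ y) ^ 2) (gaussianReal t 1) :=
  (((integrable_sq_sub_gaussianReal t 1).const_mul 2).add (integrable_const _)).mono'
    (by fun_prop) <| .of_forall fun y => by
      rw [norm_of_nonneg (sq_nonneg _)]
      exact sq_sub_postMean_le_add hτ hζ t y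

lemma integral_sq_sub_postMean_le (hτ : 0 < τ) (hζ : 3 ≤ zet τ) (t : ℝ) :
    ∫ y, (t - postMean τ y) ^ 2 ∂gaussianReal t 1 ≤ 10 ^ 5 * zet τ ^ 2 := by
  have hsq := (integrable_sq_sub_gaussianReal t 1).const_mul 2
  calc ∫ y, (t - postMean τ y) ^ 2 ∂gaussianReal t 1
      ≤ ∫ y, 2 * (y - t) ^ 2 + 50000 * zet τ ^ 2 ∂gaussianReal t 1 :=
        integral_mono (integrable_sq_sub_postMean hτ hζ t) (hsq.add (integrable_const _))
          (sq_sub_postMean_le_add hτ hζ t)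
    _ = 2 + 50000 * zet τ ^ 2 := by
        rw [integral_add hsq (integrable_const _), integral_const_mul,
          integral_sq_sub_gaussianReal, integral_const, probReal_univ]
        simp
    _ ≤ 10 ^ 5 * zet τ ^ 2 := by nlinarith

lemma setIntegral_Icc_phiN_mul_sq_postMean_le (hτ : 0 < τ) (hζ : 3 ≤ zet τ) :
    ∫ y in Icc (-zet τ) (zet τ), phiN (y - 0) * (0 - postMean τ y) ^ 2 ≤ 1920 * (τ * zet τ) := by
  have hτ' := le_one_div_fifteen_of_three_le_zet hτ hζ
  refine (setIntegral_mono_on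
    (integrable_gaussianReal_iff.1 (integrable_sq_sub_postMean hτ hζ 0)).integrableOn
    (integrableOn_const (C := 960 * τ) measure_Icc_lt_top.ne) measurableSet_Icc
    fun y _ => ?_).trans_eq ?_
  · simpa [mul_comm] using sq_postMean_mul_phiN_le hτ (by linarith) y
  · rw [setIntegral_const, Real.volume_real_Icc_of_le (by linarith), smul_eq_mul]
    ring

/- The crude bound on `(y - m)²` suffices here, since `N(0, 1)` puts mass of order `ζφ(ζ) ≤ ζτ` on
`y² - 1` beyond the threshold `ζ`. -/
lemma setIntegral_compl_Icc_phiN_mul_sq_postMean_le (hτ : 0 < τ) (hζ : 3 ≤ zet τ) :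
    ∫ y in (Icc (-zet τ) (zet τ))ᶜ, phiN (y - 0) * (0 - postMean τ y) ^ 2 ≤
      60000 * (τ * zet τ) := by
  have hφζ : phiN (zet τ) ≤ τ / 2 := by
    simpa only [exp_neg_sq_zet_div_two hτ (by linarith)] using phiN_le_exp_div_two (zet τ)
  calc ∫ y in (Icc (-zet τ) (zet τ))ᶜ, phiN (y - 0) * (0 - postMean τ y) ^ 2
      ≤ ∫ y in (Icc (-zet τ) (zet τ))ᶜ, 60000 * ((y ^ 2 - 1) * phiN y) := by
        refine setIntegral_mono_on
          (integrable_gaussianReal_iff.1 (integrable_sq_sub_postMean hτ hζ 0)).integrableOn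
          (integrable_sq_sub_one_mul_phiN.const_mul _).integrableOn measurableSet_Icc.compl
          fun y hy => ?_
        have hζy : zet τ ^ 2 ≤ y ^ 2 := by
          rw [mem_compl_iff, mem_Icc, ← abs_le, not_le] at hy
          rw [← sq_abs y]
          gcongr
        have hmean : (0 - postMean τ y) ^ 2 ≤ 60000 * (y ^ 2 - 1) := by
          nlinarith [sq_sub_postMean_le_add hτ hζ 0 y]
        rw [sub_zero y, ← mul_assoc, mul_comm]
        exact mul_le_mul_of_nonneg_right hmean (phiN_pos y).le
    _ = 60000 * (2 * zet τ * phiN (zet τ)) := by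
        rw [integral_const_mul, setIntegral_compl_Icc_sq_sub_one_mul_phiN (by linarith)]
    _ ≤ 60000 * (τ * zet τ) := by nlinarith

lemma integral_sq_postMean_le (hτ : 0 < τ) (hζ : 3 ≤ zet τ) :
    ∫ y, (0 - postMean τ y) ^ 2 ∂gaussianReal 0 1 ≤ 10 ^ 5 * (τ * zet τ) := by
  rw [integral_gaussianReal_eq_integral_phiN, ← integral_add_compl measurableSet_Icc
    (integrable_gaussianReal_iff.1 (integrable_sq_sub_postMean hτ hζ 0))]
  nlinarith [setIntegral_Icc_phiN_mul_sq_postMean_le hτ hζ,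
    setIntegral_compl_Icc_phiN_mul_sq_postMean_le hτ hζ, mul_pos hτ (by linarith : 0 < zet τ)]

end Risk

/-! ### Posterior concentration -/

/-- The Laplace transform at `t` of the posterior law of `(θ - m) ^ 2` given one observation `y`,
where `m = postMean τ y`. The posterior mass of balls around the posterior mean is bounded by
products of these, through the Chernoff bound. -/
def postLaplace (t τ y : ℝ) : ℝ :=
  (∫ θ, exp (-(t * (θ - postMean τ y) ^ 2)) * postDens τ y θ) / margDens τ y

@[fun_prop]
lemma measurable_postLaplace (t τ : ℝ) : Measurable (postLaplace t τ) := by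
  have hnum : Measurable (Function.uncurry fun y θ =>
      exp (-(t * (θ - postMean τ y) ^ 2)) * postDens τ y θ) := by
    have := measurable_uncurry_postDens τ
    unfold Function.uncurry at *
    fun_prop
  exact hnum.stronglyMeasurable.integral_prod_right.measurable.div (measurable_margDens τ)

section Concentration

variable {τ : ℝ}

lemma postLaplace_nonneg (hτ : 0 < τ) (t y : ℝ) : 0 ≤ postLaplace t τ y :=
  div_nonneg (integral_nonneg fun θ => mul_nonneg (exp_pos _).le (postDens_nonneg hτ y θ))
    (margDens_pos hτ y).le

lemma exp_neg_mul_sq_le_one {t : ℝ} (ht : 0 ≤ t) (x : ℝ) : exp (-(t * x ^ 2)) ≤ 1 :=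
  exp_le_one_iff.2 (neg_nonpos.2 (by positivity))

lemma integrable_one_sub_exp_mul_postDens (hτ : 0 < τ) {t : ℝ} (ht : 0 ≤ t) (y m : ℝ) :
    Integrable fun θ => (1 - exp (-(t * (θ - m) ^ 2))) * postDens τ y θ :=
  integrable_mul_postDens hτ y (by fun_prop) (K := 1) fun θ => by
    rw [abs_of_nonneg (sub_nonneg.2 (exp_neg_mul_sq_le_one ht _))]
    nlinarith [exp_pos (-(t * (θ - m) ^ 2)), sq_nonneg θ]

lemma one_sub_postLaplace (hτ : 0 < τ) {t : ℝ} (ht : 0 ≤ t) (y : ℝ) :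
    1 - postLaplace t τ y =
      (∫ θ, (1 - exp (-(t * (θ - postMean τ y) ^ 2))) * postDens τ y θ) / margDens τ y := by
  have hψ := (margDens_pos hτ y).ne'
  have htilt : ∀ θ, exp (-(t * (θ - postMean τ y) ^ 2)) * postDens τ y θ =
      postDens τ y θ - (1 - exp (-(t * (θ - postMean τ y) ^ 2))) * postDens τ y θ :=
    fun θ => by ring
  simp_rw [postLaplace, htilt]
  rw [integral_sub (integrable_postDens hτ y) (integrable_one_sub_exp_mul_postDens hτ ht y _),
    ← margDens, sub_div, div_self hψ, sub_sub_cancel]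

lemma postLaplace_le_one (hτ : 0 < τ) {t : ℝ} (ht : 0 ≤ t) (y : ℝ) : postLaplace t τ y ≤ 1 := by
  rw [← sub_nonneg, one_sub_postLaplace hτ ht]
  exact div_nonneg (integral_nonneg fun θ => mul_nonneg
    (sub_nonneg.2 (exp_neg_mul_sq_le_one ht _)) (postDens_nonneg hτ y θ)) (margDens_pos hτ y).le

lemma integrable_postLaplace (hτ : 0 < τ) {t : ℝ} (ht : 0 ≤ t) (ν : Measure ℝ)
    [IsFiniteMeasure ν] : Integrable (postLaplace t τ) ν :=
  .of_bound (by fun_prop) 1 <| .of_forall fun y => by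
    rw [norm_of_nonneg (postLaplace_nonneg hτ t y)]
    exact postLaplace_le_one hτ ht y

/- For `|yθ| ≤ 1` the likelihood is at most `eφ(y)`; otherwise the prior density is at most
`τ / θ² ≤ τy²`. -/
lemma margDens_le (hτ : 0 < τ) (y : ℝ) : margDens τ y ≤ 3 * phiN y + τ * y ^ 2 := by
  have hdens : ∀ θ, postDens τ y θ ≤ 3 * phiN y * gHS τ θ + τ * y ^ 2 * phiN (y - θ) := by
    intro θ
    have hφ := phiN_pos y
    have hφ' := phiN_pos (y - θ)
    have hg := gHS_nonneg hτ θ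
    rcases le_or_gt ((y * θ) ^ 2) 1 with h | h
    · have hlik : phiN (y - θ) ≤ 3 * phiN y := by
        have hexp : exp (y * θ - θ ^ 2 / 2) ≤ exp 1 :=
          exp_le_exp.2 (by linarith [(abs_le.1 ((sq_le_one_iff_abs_le_one _).1 h)).2, sq_nonneg θ])
        rw [phiN_sub]
        nlinarith [exp_one_lt_three]
      exact le_add_of_le_of_nonneg (mul_le_mul_of_nonneg_right hlik hg) (by positivity)
    · have hθ : θ ≠ 0 := by
        rintro rfl
        norm_num at h
      have hprior : gHS τ θ ≤ τ * y ^ 2 := (gHS_le_div_sq hτ hθ).trans <| by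
        rw [div_le_iff₀ (by positivity), mul_assoc, ← mul_pow]
        exact le_mul_of_one_le_right hτ.le h.le
      refine le_add_of_nonneg_of_le (by positivity) ?_
      rw [postDens, mul_comm]
      gcongr
  have hprior := (integrable_gHS hτ).const_mul (3 * phiN y)
  have hlik := (integrable_phiN.comp_sub_left y).const_mul (τ * y ^ 2)
  calc margDens τ y ≤ ∫ θ, 3 * phiN y * gHS τ θ + τ * y ^ 2 * phiN (y - θ) :=
        integral_mono (integrable_postDens hτ y) (hprior.add hlik) hdens
    _ = 3 * phiN y + τ * y ^ 2 := by
        rw [integral_add hprior hlik, integral_const_mul, integral_const_mul, integral_gHS hτ,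
          integral_sub_left_eq_self (fun u => phiN u), integral_phiN, mul_one, mul_one]

lemma margDens_le_six_mul_phiN (hτ : 0 < τ) (hζ : 3 ≤ zet τ) {y : ℝ}
    (hy : y ∈ Icc (zet τ / 4) (zet τ / 2)) : margDens τ y ≤ 6 * phiN y := by
  obtain ⟨hζy, hyζ⟩ := hy
  have hsq : 4 * y ^ 2 ≤ zet τ ^ 2 := by nlinarith
  have hexp : y ^ 2 ≤ exp (zet τ ^ 2 / 2 - y ^ 2 / 2) := by
    linarith [add_one_le_exp (zet τ ^ 2 / 2 - y ^ 2 / 2), sq_nonneg y]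
  have hτy : τ * y ^ 2 ≤ exp (-(y ^ 2) / 2) :=
    calc τ * y ^ 2 ≤ exp (-(zet τ ^ 2) / 2) * exp (zet τ ^ 2 / 2 - y ^ 2 / 2) := by
          rw [exp_neg_sq_zet_div_two hτ (by linarith)]
          gcongr
      _ = exp (-(y ^ 2) / 2) := by rw [← exp_add]; ring_nf
  linarith [margDens_le hτ y, exp_div_three_le_phiN y]

lemma le_one_sub_exp_neg_inv_mul_sq {c ζ x : ℝ} (hζ : 0 < ζ) (hc : 0 ≤ c) (hx : c * ζ ≤ |x|) :
    1 - (1 + c ^ 2)⁻¹ ≤ 1 - exp (-((ζ ^ 2)⁻¹ * x ^ 2)) := by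
  have hsq : c ^ 2 ≤ (ζ ^ 2)⁻¹ * x ^ 2 := by
    rw [← div_eq_inv_mul, le_div_iff₀ (by positivity), ← mul_pow, ← sq_abs x]
    gcongr
  have hexp : exp (-((ζ ^ 2)⁻¹ * x ^ 2)) ≤ exp (-c ^ 2) := by gcongr
  linarith [exp_neg_le_inv_one_add (sq_nonneg c)]

lemma mul_le_integral_one_sub_exp_mul_postDens (hτ : 0 < τ) {a b c k m y ζ : ℝ} (hζ : 0 < ζ)
    (hc : 0 ≤ c) (hk : 0 ≤ k) (hab : a ≤ b) (hsep : ∀ θ ∈ Icc a b, c * ζ ≤ |θ - m|)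
    (hdens : ∀ θ ∈ Icc a b, k ≤ postDens τ y θ) :
    (1 - (1 + c ^ 2)⁻¹) * k * (b - a) ≤
      ∫ θ, (1 - exp (-((ζ ^ 2)⁻¹ * (θ - m) ^ 2))) * postDens τ y θ := by
  have ht : 0 ≤ (ζ ^ 2)⁻¹ := by positivity
  have hfactor : ∀ θ, 0 ≤ 1 - exp (-((ζ ^ 2)⁻¹ * (θ - m) ^ 2)) := fun θ =>
    sub_nonneg.2 (exp_neg_mul_sq_le_one ht _)
  exact mul_sub_le_integral_of_forall_mem_Icc (integrable_one_sub_exp_mul_postDens hτ ht y m)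
    (fun θ => mul_nonneg (hfactor θ) (postDens_nonneg hτ y θ)) hab fun θ hθ =>
      mul_le_mul (le_one_sub_exp_neg_inv_mul_sq hζ hc (hsep θ hθ)) (hdens θ hθ) hk (hfactor θ)

/- Given `y`, the unnormalised posterior mass is of order at least `τ / ζ²` both near `y` and near
`0`, and no centre `m` is within `ζ / 16` of both. -/
lemma div_sq_zet_le_integral (hτ : 0 < τ) (hζ : 3 ≤ zet τ) {y : ℝ}
    (hy : y ∈ Icc (zet τ / 4) (zet τ / 2)) (m : ℝ) :
    τ / (10 ^ 5 * zet τ ^ 2) ≤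
      ∫ θ, (1 - exp (-((zet τ ^ 2)⁻¹ * (θ - m) ^ 2))) * postDens τ y θ := by
  obtain ⟨hζy, hyζ⟩ := hy
  have hζ0 : 0 < zet τ := by linarith
  have hτ' := le_one_div_fifteen_of_three_le_zet hτ hζ
  rcases le_or_gt m (zet τ / 8) with hm | hm
  · have hnear_y := mul_le_integral_one_sub_exp_mul_postDens hτ hζ0 (c := 1 / 8)
      (a := y) (b := y + 1) (m := m) (by norm_num) (by positivity) (by linarith)
      (fun θ hθ => le_abs.2 (Or.inl (by linarith [hθ.1])))
      fun θ hθ => div_sq_le_postDens hτ (by linarith [hθ.1]) hθ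
    refine le_trans ?_ hnear_y
    calc τ / (10 ^ 5 * zet τ ^ 2) ≤ 1 / 65 * (τ / (720 * zet τ ^ 2)) := by
          field_simp
          norm_num
      _ ≤ 1 / 65 * (τ / (720 * (y + 1) ^ 2)) := by
          have : 0 < y := by linarith
          gcongr
          linarith
      _ = _ := by norm_num
  · have hφ : τ / 3 ≤ phiN y := le_trans (by
      rw [← exp_neg_sq_zet_div_two hτ hζ0]
      gcongr ?_ / 3
      exact exp_le_exp.2 (by nlinarith)) (exp_div_three_le_phiN y)
    have hexp : 1 / 2 ≤ exp (-(2 * τ ^ 2)) := by nlinarith [one_sub_le_exp_neg (2 * τ ^ 2)]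
    have hnear_zero := mul_le_integral_one_sub_exp_mul_postDens hτ hζ0 (c := 1 / 16)
      (a := τ) (b := 2 * τ) (m := m) (k := τ / 3 * (1 / 2) / (480 * τ)) (by norm_num)
      (by positivity) (by linarith) (fun θ hθ => le_abs.2 (Or.inr (by linarith [hθ.2])))
      fun θ hθ => (by gcongr; exact (phiN_pos y).le :
          _ ≤ phiN y * exp (-(2 * τ ^ 2)) / (480 * τ)).trans
        (mul_exp_div_le_postDens hτ (by linarith) hθ)
    refine le_trans ?_ hnear_zero
    calc τ / (10 ^ 5 * zet τ ^ 2) ≤ τ / (10 ^ 5 * 3 ^ 2) := by gcongr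
      _ ≤ 1 / 257 * (τ / 3 * (1 / 2) / (480 * τ)) * (2 * τ - τ) := by field_simp; norm_num
      _ = _ := by norm_num

lemma div_sq_zet_le_phiN_mul_one_sub_postLaplace (hτ : 0 < τ) (hζ : 3 ≤ zet τ) {y : ℝ}
    (hy : y ∈ Icc (zet τ / 4) (zet τ / 2)) :
    τ / (6 * 10 ^ 5 * zet τ ^ 2) ≤ phiN y * (1 - postLaplace (zet τ ^ 2)⁻¹ τ y) := by
  have hφ := phiN_pos y
  have hψ := margDens_pos hτ y
  rw [one_sub_postLaplace hτ (by positivity)]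
  calc τ / (6 * 10 ^ 5 * zet τ ^ 2) = phiN y * (τ / (10 ^ 5 * zet τ ^ 2) / (6 * phiN y)) := by
        field_simp
    _ ≤ phiN y * (τ / (10 ^ 5 * zet τ ^ 2) / margDens τ y) := by
        gcongr
        exact margDens_le_six_mul_phiN hτ hζ hy
    _ ≤ _ := by
        gcongr
        exact div_sq_zet_le_integral hτ hζ hy _

lemma integral_postLaplace_le (hτ : 0 < τ) (hζ : 3 ≤ zet τ) :
    ∫ y, postLaplace (zet τ ^ 2)⁻¹ τ y ∂gaussianReal 0 1 ≤ exp (-(τ / (10 ^ 7 * zet τ))) := by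
  have hζ0 : 0 < zet τ := by linarith
  have ht : 0 ≤ (zet τ ^ 2)⁻¹ := by positivity
  have hF := integrable_postLaplace hτ ht (gaussianReal 0 1)
  have hdeficit : Integrable fun y => phiN y * (1 - postLaplace (zet τ ^ 2)⁻¹ τ y) := by
    have hsub : Integrable (fun y => 1 - postLaplace (zet τ ^ 2)⁻¹ τ y) (gaussianReal 0 1) :=
      (integrable_const 1).sub hF
    simpa only [sub_zero] using integrable_gaussianReal_iff.1 hsub
  have hwindow := mul_sub_le_integral_of_forall_mem_Icc hdeficit
    (fun y => mul_nonneg (phiN_pos y).le (sub_nonneg.2 (postLaplace_le_one hτ ht y)))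
    (by linarith)
    fun y hy => div_sq_zet_le_phiN_mul_one_sub_postLaplace hτ hζ hy
  calc ∫ y, postLaplace (zet τ ^ 2)⁻¹ τ y ∂gaussianReal 0 1
      = 1 - ∫ y, phiN y * (1 - postLaplace (zet τ ^ 2)⁻¹ τ y) := by
        have hmass := integral_gaussianReal_eq_integral_phiN 0
          fun y => 1 - postLaplace (zet τ ^ 2)⁻¹ τ y
        rw [integral_sub (integrable_const 1) hF, integral_const, probReal_univ, one_smul] at hmass
        simp_rw [sub_zero] at hmass
        linarith
    _ ≤ 1 - τ / (6 * 10 ^ 5 * zet τ ^ 2) * (zet τ / 2 - zet τ / 4) := by linarith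
    _ ≤ 1 - τ / (10 ^ 7 * zet τ) := by
        rw [sub_le_sub_iff_left, div_mul_eq_mul_div,
          div_le_div_iff₀ (by positivity) (by positivity)]
        nlinarith [mul_pos hτ (pow_pos hζ0 2)]
    _ ≤ exp (-(τ / (10 ^ 7 * zet τ))) := one_sub_le_exp_neg _

end Concentration

/-! ### Coverage of credible balls -/

instance {n : ℕ} (θ₀ : Fin n → ℝ) : IsProbabilityMeasure (Pdata θ₀) := by
  unfold Pdata
  infer_instance

section Coverage

variable {n p : ℕ} {τ : ℝ} {θ₀ : Fin n → ℝ}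

lemma l2dist_sq (a b : Fin n → ℝ) : l2dist a b ^ 2 = ∑ i, (a i - b i) ^ 2 :=
  Real.sq_sqrt (Finset.sum_nonneg fun _ _ => sq_nonneg _)

lemma integral_fullDens (τ : ℝ) (y : Fin n → ℝ) :
    ∫ θ, fullDens τ y θ = ∏ i, margDens τ (y i) :=
  integral_fintype_prod_volume_eq_prod fun i => postDens τ (y i)

lemma fullPostProb_l2dist_le (hτ : 0 < τ) {t : ℝ} (ht : 0 ≤ t) {r : ℝ} (hr : 0 ≤ r)
    (y : Fin n → ℝ) :
    fullPostProb τ y {θ | l2dist θ (fullPostMean τ y) ≤ r} ≤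
      exp (t * r ^ 2) * ∏ i, postLaplace t τ (y i) := by
  have hψ : 0 < ∏ i, margDens τ (y i) := Finset.prod_pos fun i _ => margDens_pos hτ (y i)
  have hchernoff := setIntegral_prod_le_exp_mul_prod_integral (μ := fun _ : Fin n => volume)
    (fun i => postDens_nonneg hτ (y i)) (fun i => integrable_postDens hτ (y i))
    (w := fun i θ => (θ - postMean τ (y i)) ^ 2) (fun i θ => sq_nonneg _)
    (fun i => by fun_prop) ht (r ^ 2)
  have hball : {θ : Fin n → ℝ | l2dist θ (fullPostMean τ y) ≤ r} =
      {θ | ∑ i, (θ i - postMean τ (y i)) ^ 2 ≤ r ^ 2} := by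
    ext θ
    exact Real.sqrt_le_left hr
  simp_rw [postLaplace]
  rw [fullPostProb, integral_fullDens, hball, Finset.prod_div_distrib, ← mul_div_assoc]
  exact div_le_div_of_nonneg_right hchernoff hψ.le

lemma nonneg_of_fullPostProb_l2dist_pos {y : Fin n → ℝ} {r : ℝ}
    (h : 0 < fullPostProb τ y {θ | l2dist θ (fullPostMean τ y) ≤ r}) : 0 ≤ r := by
  by_contra! hr
  have hempty : {θ : Fin n → ℝ | l2dist θ (fullPostMean τ y) ≤ r} = ∅ :=
    eq_empty_of_forall_notMem fun θ hθ => (hr.trans_le (Real.sqrt_nonneg _)).not_ge hθ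
  simp [fullPostProb, hempty] at h

lemma card_ne_zero_le (hθ₀ : θ₀ ∈ nearlyBlack n p) :
    (Finset.univ.filter fun i => θ₀ i ≠ 0).card ≤ p := by
  rw [← Set.ncard_coe_finset]
  simpa [nearlyBlack] using hθ₀

lemma sub_le_card_eq_zero (hθ₀ : θ₀ ∈ nearlyBlack n p) :
    (n : ℝ) - p ≤ (Finset.univ.filter fun i => θ₀ i = 0).card := by
  have hcard := Finset.card_filter_add_card_filter_not (s := Finset.univ) fun i => θ₀ i = 0
  rw [Finset.card_univ, Fintype.card_fin] at hcard
  have hnonzeros := card_ne_zero_le hθ₀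
  rw [sub_le_iff_le_add]
  norm_cast
  lia

lemma mul_measureReal_le_sq_l2dist_postMean_le (hτ : 0 < τ) (hζ : 3 ≤ zet τ)
    (hθ₀ : θ₀ ∈ nearlyBlack n p) (s : ℝ) :
    s * (Pdata θ₀).real {y | s ≤ l2dist θ₀ (fullPostMean τ y) ^ 2} ≤
      10 ^ 5 * (p * zet τ ^ 2 + n * (τ * zet τ)) := by
  have : 0 < zet τ := by linarith
  have hrisk : ∀ i, ∫ y, (θ₀ i - postMean τ y) ^ 2 ∂gaussianReal (θ₀ i) 1 ≤
      10 ^ 5 * ((if θ₀ i ≠ 0 then zet τ ^ 2 else 0) + τ * zet τ) := by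
    intro i
    split_ifs with hi
    · exact (integral_sq_sub_postMean_le hτ hζ _).trans
        (by gcongr; exact le_add_of_nonneg_right (by positivity))
    · rw [not_ne_iff.1 hi, zero_add]
      exact integral_sq_postMean_le hτ hζ
  simp_rw [l2dist_sq]
  calc s * (Pdata θ₀).real {y | s ≤ ∑ i, (θ₀ i - fullPostMean τ y i) ^ 2}
      ≤ ∑ i, ∫ y, (θ₀ i - postMean τ y) ^ 2 ∂gaussianReal (θ₀ i) 1 :=
        mul_measureReal_pi_le_sum_integral (fun i y => sq_nonneg _)
          (fun i => integrable_sq_sub_postMean hτ hζ (θ₀ i)) s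
    _ ≤ ∑ i, 10 ^ 5 * ((if θ₀ i ≠ 0 then zet τ ^ 2 else 0) + τ * zet τ) :=
        Finset.sum_le_sum fun i _ => hrisk i
    _ = 10 ^ 5 * ((Finset.univ.filter fun i => θ₀ i ≠ 0).card * zet τ ^ 2 + n * (τ * zet τ)) := by
        rw [← Finset.mul_sum, Finset.sum_add_distrib, ← Finset.sum_filter, Finset.sum_const,
          Finset.sum_const, Finset.card_univ, Fintype.card_fin, nsmul_eq_mul, nsmul_eq_mul]
    _ ≤ 10 ^ 5 * (p * zet τ ^ 2 + n * (τ * zet τ)) := by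
        gcongr
        exact card_ne_zero_le hθ₀

lemma prod_integral_postLaplace_le (hτ : 0 < τ) (hζ : 3 ≤ zet τ) (θ₀ : Fin n → ℝ) :
    ∏ i, ∫ y, postLaplace (zet τ ^ 2)⁻¹ τ y ∂gaussianReal (θ₀ i) 1 ≤
      exp (-(τ / (10 ^ 7 * zet τ) * (Finset.univ.filter fun i => θ₀ i = 0).card)) := by
  have ht : 0 ≤ (zet τ ^ 2)⁻¹ := by positivity
  have hcoord : ∀ i, ∫ y, postLaplace (zet τ ^ 2)⁻¹ τ y ∂gaussianReal (θ₀ i) 1 ≤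
      if θ₀ i = 0 then exp (-(τ / (10 ^ 7 * zet τ))) else 1 := by
    intro i
    split_ifs with hi
    · rw [hi]
      exact integral_postLaplace_le hτ hζ
    · simpa using integral_mono (integrable_postLaplace hτ ht _) (integrable_const 1)
        (postLaplace_le_one hτ ht) (μ := gaussianReal (θ₀ i) 1)
  calc ∏ i, ∫ y, postLaplace (zet τ ^ 2)⁻¹ τ y ∂gaussianReal (θ₀ i) 1
      ≤ ∏ i, if θ₀ i = 0 then exp (-(τ / (10 ^ 7 * zet τ))) else 1 :=
        Finset.prod_le_prod (fun i _ => integral_nonneg (postLaplace_nonneg hτ _))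
          fun i _ => hcoord i
    _ = exp (-(τ / (10 ^ 7 * zet τ) * (Finset.univ.filter fun i => θ₀ i = 0).card)) := by
        rw [Finset.prod_ite, Finset.prod_const, Finset.prod_const_one, mul_one, ← exp_nat_mul,
          mul_neg, mul_comm]

lemma mul_measureReal_sq_radius_le (hτ : 0 < τ) (hζ : 3 ≤ zet τ) {c : ℝ} {r : (Fin n → ℝ) → ℝ}
    (hr0 : 0 ≤ r) (hr : ∀ y, c ≤ fullPostProb τ y {θ | l2dist θ (fullPostMean τ y) ≤ r y})
    (hc : 0 ≤ c) (θ₀ : Fin n → ℝ) (s : ℝ) :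
    c * (Pdata θ₀).real {y | r y ^ 2 ≤ s} ≤ exp ((zet τ ^ 2)⁻¹ * s -
      τ / (10 ^ 7 * zet τ) * (Finset.univ.filter fun i => θ₀ i = 0).card) := by
  have ht : 0 ≤ (zet τ ^ 2)⁻¹ := by positivity
  have hsubset : {y | r y ^ 2 ≤ s} ⊆ {y : Fin n → ℝ |
      exp (-((zet τ ^ 2)⁻¹ * s)) * c ≤ ∏ i, postLaplace (zet τ ^ 2)⁻¹ τ (y i)} := by
    intro y (hy : r y ^ 2 ≤ s)
    rw [mem_ofPred_eq, exp_neg, inv_mul_le_iff₀ (exp_pos _)]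
    refine ((hr y).trans (fullPostProb_l2dist_le hτ ht (hr0 y) y)).trans ?_
    gcongr
    exact Finset.prod_nonneg fun i _ => postLaplace_nonneg hτ _ _
  have hmarkov := mul_measureReal_pi_le_prod_integral (μ := fun i => gaussianReal (θ₀ i) 1)
    (fun _ => postLaplace_nonneg hτ (zet τ ^ 2)⁻¹) (fun i => integrable_postLaplace hτ ht _)
    (exp (-((zet τ ^ 2)⁻¹ * s)) * c)
  rw [sub_eq_add_neg, exp_add, ← inv_mul_le_iff₀ (exp_pos _), ← exp_neg, ← mul_assoc]
  calc _ ≤ exp (-((zet τ ^ 2)⁻¹ * s)) * c * (Pdata θ₀).real {y : Fin n → ℝ |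
        exp (-((zet τ ^ 2)⁻¹ * s)) * c ≤ ∏ i, postLaplace (zet τ ^ 2)⁻¹ τ (y i)} := by
        gcongr
        exact measure_ne_top _ _
    _ ≤ _ := hmarkov.trans (prod_integral_postLaplace_le hτ hζ θ₀)

lemma natCast_mul_zet_le (hτ : 0 < τ) {N : ℕ} (hpN : (p : ℝ) ≤ N / 3) (hopt : tauOpt N p ≤ τ) :
    p * zet τ ≤ 2 * (N * τ) := by
  rcases p.eq_zero_or_pos with rfl | hp
  · rw [Nat.cast_zero, zero_mul]
    positivity
  have hp : (0 : ℝ) < p := by exact_mod_cast hp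
  have hN : (0 : ℝ) < N := by linarith
  have hlog : 1 ≤ log (N / p) := by
    rw [Real.le_log_iff_exp_le (by positivity), le_div_iff₀ hp]
    nlinarith [exp_one_lt_three]
  have hpτ : (p : ℝ) / N ≤ τ :=
    (le_mul_of_one_le_right (by positivity) (Real.one_le_sqrt.2 hlog)).trans hopt
  have hζ : zet τ ≤ 2 * √(log (N / p)) := by
    have hτN : log (1 / τ) ≤ log (N / p) := by
      rw [one_div, log_inv, ← inv_div (p : ℝ) N, log_inv]
      gcongr
    refine Real.sqrt_le_iff.2 ⟨by positivity, ?_⟩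
    rw [mul_pow, Real.sq_sqrt (by linarith)]
    linarith
  calc p * zet τ ≤ p * (2 * √(log (N / p))) := by gcongr
    _ = 2 * (N * tauOpt N p) := by rw [tauOpt]; field_simp
    _ ≤ 2 * (N * τ) := by gcongr

lemma measureReal_le_sq_l2dist_postMean_le (hτ : 0 < τ) (hζ : 3 ≤ zet τ) (hn : 0 < n)
    (hθ₀ : θ₀ ∈ nearlyBlack n p) (hpζ : p * zet τ ≤ 2 * (n * τ)) {K : ℝ} (hK : 0 < K) :
    (Pdata θ₀).real {y | K * (n * τ * zet τ) ≤ l2dist θ₀ (fullPostMean τ y) ^ 2} ≤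
      3 * 10 ^ 5 / K := by
  have hζ0 : 0 < zet τ := by linarith
  have hV : 0 < n * τ * zet τ := by positivity
  rw [le_div_iff₀ hK]
  refine le_of_mul_le_mul_left ?_ hV
  nlinarith [mul_measureReal_le_sq_l2dist_postMean_le hτ hζ hθ₀ (K * (n * τ * zet τ)),
    mul_le_mul_of_nonneg_right hpζ hζ0.le]

lemma measureReal_sq_radius_le (hτ : 0 < τ) (hζ : 3 ≤ zet τ) (hpn : (p : ℝ) ≤ n / 3)
    (hpζ : p * zet τ ≤ 2 * (n * τ)) (hθ₀ : θ₀ ∈ nearlyBlack n p) {c : ℝ} (hc : 0 < c)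
    {r : (Fin n → ℝ) → ℝ} (hr0 : 0 ≤ r)
    (hr : ∀ y, c ≤ fullPostProb τ y {θ | l2dist θ (fullPostMean τ y) ≤ r y}) :
    (Pdata θ₀).real {y | r y ^ 2 ≤ n * τ * zet τ / (4 * 10 ^ 7)} ≤
      exp (-(p / (8 * 10 ^ 7))) / c := by
  have hζ0 : 0 < zet τ := by linarith
  rw [le_div_iff₀' hc]
  refine (mul_measureReal_sq_radius_le hτ hζ hr0 hr hc.le θ₀ _).trans (exp_le_exp.2 ?_)
  have hzeros : (n : ℝ) / 2 ≤ (Finset.univ.filter fun i => θ₀ i = 0).card := by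
    linarith [sub_le_card_eq_zero hθ₀]
  calc _ ≤ (zet τ ^ 2)⁻¹ * (n * τ * zet τ / (4 * 10 ^ 7)) -
        τ / (10 ^ 7 * zet τ) * (n / 2) := by gcongr
    _ = -(n * τ / zet τ / (4 * 10 ^ 7)) := by field_simp; norm_num
    _ ≤ -(p / (8 * 10 ^ 7)) := by
        have : (p : ℝ) / 2 ≤ n * τ / zet τ := by rw [le_div_iff₀ hζ0]; linarith
        linarith

lemma one_sub_le_measureReal_credibleBall (hτ : 0 < τ) (hζ : 3 ≤ zet τ) (hn : 0 < n)
    (hpn : (p : ℝ) ≤ n / 3) (hopt : tauOpt n p ≤ τ) (hθ₀ : θ₀ ∈ nearlyBlack n p)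
    {α : ℝ} (hα : α ∈ Ioo 0 1) (hp : exp (-(p / (8 * 10 ^ 7))) / (1 - α) ≤ α / 2)
    {r : (Fin n → ℝ) → ℝ}
    (hr : ∀ y, fullPostProb τ y {θ | l2dist θ (fullPostMean τ y) ≤ r y} = 1 - α) :
    1 - α ≤ (Pdata θ₀).real
      {y | l2dist θ₀ (fullPostMean τ y) ≤ √(24 * 10 ^ 12 / α) * r y} := by
  obtain ⟨hα0, hα1⟩ := hα
  have hr0 : 0 ≤ r := fun y => nonneg_of_fullPostProb_l2dist_pos (by rw [hr]; linarith)
  have hpζ := natCast_mul_zet_le hτ hpn hopt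
  have hradius := (measureReal_sq_radius_le hτ hζ hpn hpζ hθ₀ (sub_pos.2 hα1) hr0
    fun y => (hr y).ge).trans hp
  have hbias : (Pdata θ₀).real {y | √(24 * 10 ^ 12 / α) ^ 2 * (n * τ * zet τ / (4 * 10 ^ 7)) ≤
      l2dist θ₀ (fullPostMean τ y) ^ 2} ≤ α / 2 := by
    have hscale : √(24 * 10 ^ 12 / α) ^ 2 * (n * τ * zet τ / (4 * 10 ^ 7)) =
        6 * 10 ^ 5 / α * (n * τ * zet τ) := by
      rw [Real.sq_sqrt (by positivity)]
      ring
    rw [hscale]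
    refine (measureReal_le_sq_l2dist_postMean_le hτ hζ hn hθ₀ hpζ (by positivity)).trans_eq ?_
    field_simp
    norm_num
  simpa using one_sub_le_measureReal_le_mul hr0 (Real.sqrt_nonneg _) hbias hradius

end Coverage


section Asymptotics

lemma three_le_zet {τ : ℝ} (hτ : 0 < τ) (hτ5 : τ ≤ exp (-5)) : 3 ≤ zet τ := by
  have hlog : 5 ≤ log (1 / τ) := by
    rw [one_div, log_inv, le_neg]
    exact (log_le_iff_le_exp hτ).2 hτ5
  exact Real.le_sqrt_of_sq_le (by linarith)

lemma eventually_three_le_zet {ι : Type*} {l : Filter ι} {τ : ι → ℝ} (hτpos : ∀ n, 0 < τ n)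
    (hτ : Tendsto τ l (nhds 0)) : ∀ᶠ n in l, 3 ≤ zet (τ n) :=
  (hτ.eventually_le_const (exp_pos (-5))).mono fun n => three_le_zet (hτpos n)

lemma tendsto_exp_neg_natCast_div_atTop {ι : Type*} {l : Filter ι} {p : ι → ℕ}
    (hp : Tendsto p l atTop) {c : ℝ} (hc : 0 < c) :
    Tendsto (fun n => exp (-(p n / c))) l (nhds 0) :=
  tendsto_exp_neg_atTop_nhds_zero.comp
    ((tendsto_natCast_atTop_atTop.comp hp).atTop_div_const hc)

end Asymptotics

theorem stmt_9
    (α : ℝ) (hα : α ∈ Set.Ioo (0 : ℝ) 1)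
    (p : ℕ → ℕ) (hp : Tendsto p atTop atTop)
    (hpo : (fun n => (p n : ℝ)) =o[atTop] fun n => ((n : ℝ) + 1))
    (τ : ℕ → ℝ) (hτpos : ∀ n, 0 < τ n)
    (hτlb : ∀ n, tauOpt (n + 1) (p n) ≤ τ n)
    (hτ : Tendsto τ atTop (nhds 0))
    (rball : (n : ℕ) → (Fin (n + 1) → ℝ) → ℝ)
    (hrball : ∀ (n : ℕ) (y : Fin (n + 1) → ℝ),
      fullPostProb (τ n) y
          {θ | l2dist θ (fullPostMean (τ n) y) ≤ rball n y} = 1 - α) :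
    ∃ L > 0,
      ENNReal.ofReal (1 - α) ≤
        Filter.liminf
          (fun n =>
            ⨅ θ ∈ nearlyBlack (n + 1) (p n),
              Pdata θ
                {y : Fin (n + 1) → ℝ |
                  l2dist θ (fullPostMean (τ n) y) ≤ L * rball n y})
          atTop := by
  have hL : 0 < √(24 * 10 ^ 12 / α) := Real.sqrt_pos.2 (div_pos (by norm_num) hα.1)
  have hζ := eventually_three_le_zet hτpos hτ
  have hsparse : ∀ᶠ n in atTop, (p n : ℝ) ≤ (n + 1 : ℕ) / 3 := by
    filter_upwards [hpo.bound (c := 1 / 3) (by norm_num)] with n hn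
    rw [Real.norm_of_nonneg (by positivity), Real.norm_of_nonneg (by positivity)] at hn
    push_cast
    linarith
  have hexp : ∀ᶠ n in atTop, exp (-(p n / (8 * 10 ^ 7))) / (1 - α) ≤ α / 2 := by
    have hlim := (tendsto_exp_neg_natCast_div_atTop hp (c := 8 * 10 ^ 7) (by norm_num)).div_const
      (1 - α)
    rw [zero_div] at hlim
    exact hlim.eventually_le_const (half_pos hα.1)
  refine ⟨_, hL, le_liminf_of_le (by isBoundedDefault) ?_⟩
  filter_upwards [hζ, hsparse, hexp] with n hζn hpn hexpn
  exact le_iInf₂ fun θ hθ => ENNReal.ofReal_le_of_le_toReal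
    (one_sub_le_measureReal_credibleBall (hτpos n) hζn n.succ_pos hpn (hτlb n) hθ hα hexpn
      (hrball n))

end
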